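/- Let 1 < p < q, M ≥ 1, and let f : [0,1) → (0,∞) be non-decreasing, bounded below by some ε > 0, and satisfying ((1/t) ∫_0^t f)·((1/t) ∫_0^t f^{-1/(q-1)})^{q-1} ≤ M for every t ∈ (0,1]. Set c = M^{1/(q-1)}. Then for every t ∈ (0,1]: ((q−1)/(q−p)) ∫_0^t f(s)^{-1/(q-1)} ((1/s) ∫_0^s f)^{-1/(p-1)+1/(q-1)} ds ≤ c ∫_0^t ((1/s) ∫_0^s f)^{-1/(p-1)} ds + ((p−1)/(q−p)) · M^{1/(p-1)} · c^{-(q-p)/(p-1)} · t · ((1/t) ∫_0^t f)^{-1/(p-1)}. -/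

import Mathlib

open MeasureTheory Set intervalIntegral

/-!
Write `F s` for the average of `f` over `(0, s)`, and put `a = 1 / (q - 1)`, `b = 1 / (p - 1)`, so
that `0 < a < b`. For any bounded `g`, integrating the derivative of `(∫₀ˢ g) * F s ^ r` gives
`∫₀ᵀ g F ^ r = T * avg g T * F T ^ r - r ∫₀ᵀ (avg g) * (f F ^ (r - 1) - F ^ r)`,
because `dF / ds = (f - F) / s`. Take once `g = f ^ (-a)`, `r = a - b`, and once `g = 1`, `r = -b`.
The `A_q` condition is `avg (f ^ (-a)) ≤ c F ^ (-a)`, and `f ≥ F` by monotonicity, so the remainder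
of the first identity is at most `c` times that of the second; eliminating the latter gives the
inequality.
-/

open Filter Topology

section BoundedFactor

variable {u v : ℝ → ℝ} {a b C : ℝ}

lemma intervalIntegrable_of_abs_le (hab : a ≤ b)
    (hm : AEStronglyMeasurable u (volume.restrict (Ioo a b))) (hC : ∀ x ∈ Ioo a b, |u x| ≤ C) :
    IntervalIntegrable u volume a b := by
  rw [intervalIntegrable_iff_integrableOn_Ioo_of_le hab]
  exact .of_bound measure_Ioo_lt_top hm C ((ae_restrict_mem measurableSet_Ioo).mono hC)

lemma intervalIntegrable_mul_of_continuousOn_of_abs_le (hab : a ≤ b)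
    (hu : IntervalIntegrable u volume a b) (hv : ContinuousOn v (Ioc a b))
    (hC : ∀ x ∈ Ioc a b, |v x| ≤ C) : IntervalIntegrable (fun x => u x * v x) volume a b := by
  rw [intervalIntegrable_iff_integrableOn_Ioc_of_le hab] at hu ⊢
  exact hu.mul_bdd (hv.aestronglyMeasurable measurableSet_Ioc)
    ((ae_restrict_mem measurableSet_Ioc).mono hC)

lemma continuousOn_Icc_mul_of_abs_le (hu : ContinuousOn u (Icc a b)) (hua : u a = 0)
    (hv : ContinuousOn v (Ioc a b)) (hC : ∀ x ∈ Ioc a b, |v x| ≤ C) :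
    ContinuousOn (fun x => u x * v x) (Icc a b) := by
  intro x hx
  rcases hx.1.eq_or_lt with rfl | hax
  · have hbound : ∀ᶠ y in 𝓝[Icc a b] a, |v y| ≤ max C |v a| := by
      filter_upwards [self_mem_nhdsWithin] with y hy
      rcases hy.1.eq_or_lt with rfl | hay
      · exact le_max_right _ _
      · exact (hC y ⟨hay, hy.2⟩).trans (le_max_left _ _)
    have hu0 : Tendsto u (𝓝[Icc a b] a) (𝓝 0) := hua ▸ hu a hx
    simpa only [ContinuousWithinAt, hua, zero_mul] using
      hu0.zero_mul_isBoundedUnder_le ⟨_, eventually_map.2 hbound⟩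
  · refine (hu x hx).mul ((hv x ⟨hax, hx.2⟩).mono_of_mem_nhdsWithin ?_)
    filter_upwards [self_mem_nhdsWithin, mem_nhdsWithin_of_mem_nhds (Ioi_mem_nhds hax)]
      with y hy hay using ⟨hay, hy.2⟩

end BoundedFactor

/-- The Hardy averaging operator: `hardyAvg f s` is the average of `f` over `(0, s)`, with junk
value `0` at `s = 0` and when `f` is not integrable. -/
noncomputable def hardyAvg (f : ℝ → ℝ) (s : ℝ) : ℝ := (1 / s) * ∫ y in (0 : ℝ)..s, f y

section HardyAvg

variable {f g : ℝ → ℝ} {s T ε C : ℝ}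

lemma intervalIntegrable_of_mem_Ioc (hf : IntervalIntegrable f volume 0 T) (hs : s ∈ Ioc 0 T) :
    IntervalIntegrable f volume 0 s :=
  hf.mono_set (uIcc_subset_uIcc_left (Icc_subset_uIcc (Ioc_subset_Icc_self hs)))

lemma mul_hardyAvg (f : ℝ → ℝ) (s : ℝ) : s * hardyAvg f s = ∫ y in (0 : ℝ)..s, f y := by
  rcases eq_or_ne s 0 with rfl | hs
  · simp
  · rw [hardyAvg]; field_simp

lemma hardyAvg_const (k : ℝ) (hs : s ≠ 0) : hardyAvg (fun _ => k) s = k := by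
  simp [hardyAvg, hs]

lemma hardyAvg_nonneg (hs : 0 ≤ s) (hf : ∀ x ∈ Ioo 0 s, 0 ≤ f x) : 0 ≤ hardyAvg f s := by
  rw [hardyAvg, integral_of_le hs, integral_Ioc_eq_integral_Ioo]
  exact mul_nonneg (by positivity) (setIntegral_nonneg measurableSet_Ioo hf)

lemma hardyAvg_mono (hs : 0 ≤ s) (hf : IntervalIntegrable f volume 0 s)
    (hg : IntervalIntegrable g volume 0 s) (hfg : ∀ x ∈ Ioo 0 s, f x ≤ g x) :
    hardyAvg f s ≤ hardyAvg g s :=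
  mul_le_mul_of_nonneg_left (integral_mono_on_of_le_Ioo hs hf hg hfg) (by positivity)

lemma le_hardyAvg (hf : IntervalIntegrable f volume 0 T) (hε : ∀ x ∈ Ioo 0 T, ε ≤ f x)
    (hs : s ∈ Ioc 0 T) : ε ≤ hardyAvg f s := by
  simpa only [hardyAvg_const ε hs.1.ne'] using
    hardyAvg_mono hs.1.le intervalIntegrable_const (intervalIntegrable_of_mem_Ioc hf hs)
      fun x hx => hε x ⟨hx.1, hx.2.trans_le hs.2⟩

lemma hardyAvg_le (hf : IntervalIntegrable f volume 0 T) (hC : ∀ x ∈ Ioo 0 T, f x ≤ C)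
    (hs : s ∈ Ioc 0 T) : hardyAvg f s ≤ C := by
  simpa only [hardyAvg_const C hs.1.ne'] using
    hardyAvg_mono hs.1.le (intervalIntegrable_of_mem_Ioc hf hs) intervalIntegrable_const
      fun x hx => hC x ⟨hx.1, hx.2.trans_le hs.2⟩

lemma abs_hardyAvg_le (hf : IntervalIntegrable f volume 0 T) (hC : ∀ x ∈ Ioo 0 T, |f x| ≤ C)
    (hs : s ∈ Ioc 0 T) : |hardyAvg f s| ≤ C :=
  abs_le.2 ⟨le_hardyAvg hf (fun x hx => (abs_le.1 (hC x hx)).1) hs,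
    hardyAvg_le hf (fun x hx => (abs_le.1 (hC x hx)).2) hs⟩

lemma exists_pos_le_hardyAvg (hT : 0 < T) (hf : IntervalIntegrable f volume 0 T)
    (hpos : ∀ x ∈ Ioo 0 T, 0 < f x) : ∃ κ > 0, ∀ t ∈ Ioo (T / 2) T, κ ≤ hardyAvg f t := by
  have hhalf : T / 2 ∈ Ioc 0 T := ⟨half_pos hT, half_le_self hT.le⟩
  have hκ : 0 < ∫ y in (0 : ℝ)..(T / 2), f y :=
    intervalIntegral_pos_of_pos_on (intervalIntegrable_of_mem_Ioc hf hhalf)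
      (fun x hx => hpos x ⟨hx.1, hx.2.trans_le hhalf.2⟩) hhalf.1
  refine ⟨_, div_pos hκ hT, fun t ht => (div_le_iff₀ hT).2 ?_⟩
  have htT : t ∈ Ioc 0 T := ⟨hhalf.1.trans ht.1, ht.2.le⟩
  have hft := intervalIntegrable_of_mem_Ioc hf htT
  have hnonneg : 0 ≤ᵐ[volume.restrict (Ioc 0 t)] f :=
    (ae_restrict_mem measurableSet_Ioc).mono fun x hx => (hpos x ⟨hx.1, hx.2.trans_lt ht.2⟩).le
  calc ∫ y in (0 : ℝ)..(T / 2), f y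
      ≤ ∫ y in (0 : ℝ)..t, f y :=
        integral_mono_interval le_rfl hhalf.1.le ht.1.le hnonneg hft
    _ = hardyAvg f t * t := by rw [mul_comm, mul_hardyAvg]
    _ ≤ hardyAvg f t * T :=
        mul_le_mul_of_nonneg_left ht.2.le
          (hardyAvg_nonneg htT.1.le fun x hx => (hpos x ⟨hx.1, hx.2.trans ht.2⟩).le)

lemma hardyAvg_le_self_of_monotoneOn (hf : IntervalIntegrable f volume 0 s)
    (hmono : MonotoneOn f (Ioc 0 s)) (hs : 0 < s) : hardyAvg f s ≤ f s :=
  hardyAvg_le hf (fun _ hx => hmono (Ioo_subset_Ioc_self hx) ⟨hs, le_rfl⟩ hx.2.le) ⟨hs, le_rfl⟩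

lemma continuousOn_hardyAvg (hf : IntervalIntegrable f volume 0 T) :
    ContinuousOn (hardyAvg f) (Ioc 0 T) := by
  refine ContinuousOn.mul (continuousOn_const.div continuousOn_id fun x hx => hx.1.ne') ?_
  exact (continuousOn_primitive_interval' hf left_mem_uIcc).mono
    (Ioc_subset_Icc_self.trans Icc_subset_uIcc)

lemma hasDerivAt_integral_of_continuousAt (hf : IntervalIntegrable f volume 0 T)
    (hs : s ∈ Ioo 0 T) (hfs : ContinuousAt f s) :
    HasDerivAt (fun t => ∫ y in (0 : ℝ)..t, f y) (f s) s :=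
  integral_hasDerivAt_right (intervalIntegrable_of_mem_Ioc hf (Ioo_subset_Ioc_self hs))
    ⟨Ioc 0 T, Ioc_mem_nhds hs.1 hs.2, hf.1.aestronglyMeasurable⟩ hfs

lemma hasDerivAt_hardyAvg (hf : IntervalIntegrable f volume 0 T) (hs : s ∈ Ioo 0 T)
    (hfs : ContinuousAt f s) : HasDerivAt (hardyAvg f) ((f s - hardyAvg f s) / s) s := by
  have hs0 : s ≠ 0 := hs.1.ne'
  have h := ((hasDerivAt_id s).fun_inv hs0).fun_mul (hasDerivAt_integral_of_continuousAt hf hs hfs)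
  simp only [id, inv_eq_one_div] at h
  refine h.congr_deriv ?_
  rw [hardyAvg]
  field_simp
  ring

end HardyAvg

section HardyAvgRpow

variable {f g : ℝ → ℝ} {T ε C c r : ℝ}

lemma abs_rpow_le_of_nonpos {x : ℝ} (hε : 0 < ε) (hx : ε ≤ x) (hr : r ≤ 0) : |x ^ r| ≤ ε ^ r := by
  rw [abs_of_nonneg (Real.rpow_nonneg (hε.le.trans hx) r)]
  exact Real.rpow_le_rpow_of_nonpos hε hx hr

lemma continuousOn_hardyAvg_rpow (hε : 0 < ε) (hf : IntervalIntegrable f volume 0 T)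
    (hle : ∀ x ∈ Ioo 0 T, ε ≤ f x) (r : ℝ) :
    ContinuousOn (fun s => hardyAvg f s ^ r) (Ioc 0 T) :=
  (continuousOn_hardyAvg hf).rpow_const fun _ hs => .inl (hε.trans_le (le_hardyAvg hf hle hs)).ne'

lemma intervalIntegrable_mul_hardyAvg_rpow (hT : 0 ≤ T) (hε : 0 < ε)
    (hf : IntervalIntegrable f volume 0 T) (hle : ∀ x ∈ Ioo 0 T, ε ≤ f x)
    (hg : IntervalIntegrable g volume 0 T) (hr : r ≤ 0) :
    IntervalIntegrable (fun s => g s * hardyAvg f s ^ r) volume 0 T :=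
  intervalIntegrable_mul_of_continuousOn_of_abs_le hT hg (continuousOn_hardyAvg_rpow hε hf hle r)
    fun _ hs => abs_rpow_le_of_nonpos hε (le_hardyAvg hf hle hs) hr

lemma intervalIntegrable_mul_hardyAvg_rpow_sub (hT : 0 ≤ T) (hε : 0 < ε)
    (hf : IntervalIntegrable f volume 0 T) (hle : ∀ x ∈ Ioo 0 T, ε ≤ f x) (hr : r ≤ 0) :
    IntervalIntegrable (fun s => f s * hardyAvg f s ^ (r - 1) - hardyAvg f s ^ r) volume 0 T := by
  refine .sub (intervalIntegrable_mul_hardyAvg_rpow hT hε hf hle hf (by linarith)) ?_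
  simpa only [one_mul] using intervalIntegrable_mul_hardyAvg_rpow hT hε hf hle
    (intervalIntegrable_const (c := (1 : ℝ))) hr

lemma intervalIntegrable_mul_hardyAvg_rpow_sub_mul_hardyAvg (hT : 0 ≤ T) (hε : 0 < ε)
    (hf : IntervalIntegrable f volume 0 T) (hle : ∀ x ∈ Ioo 0 T, ε ≤ f x)
    (hg : IntervalIntegrable g volume 0 T) (hC : ∀ x ∈ Ioo 0 T, |g x| ≤ C) (hr : r ≤ 0) :
    IntervalIntegrable
      (fun s => (f s * hardyAvg f s ^ (r - 1) - hardyAvg f s ^ r) * hardyAvg g s) volume 0 T :=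
  intervalIntegrable_mul_of_continuousOn_of_abs_le hT
    (intervalIntegrable_mul_hardyAvg_rpow_sub hT hε hf hle hr) (continuousOn_hardyAvg hg)
    fun _ hs => abs_hardyAvg_le hg hC hs

lemma hasDerivAt_integral_mul_hardyAvg_rpow {x : ℝ} (hf : IntervalIntegrable f volume 0 T)
    (hg : IntervalIntegrable g volume 0 T) (hx : x ∈ Ioo 0 T) (hpos : 0 < hardyAvg f x)
    (hfx : ContinuousAt f x) (hgx : ContinuousAt g x) :
    HasDerivAt (fun s => (∫ y in (0 : ℝ)..s, g y) * hardyAvg f s ^ r)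
      (g x * hardyAvg f x ^ r +
        r * ((f x * hardyAvg f x ^ (r - 1) - hardyAvg f x ^ r) * hardyAvg g x)) x := by
  refine ((hasDerivAt_integral_of_continuousAt hg hx hgx).fun_mul
    ((hasDerivAt_hardyAvg hf hx hfx).rpow_const (p := r) (.inl hpos.ne'))).congr_deriv ?_
  have hx0 : x ≠ 0 := hx.1.ne'
  rw [← mul_hardyAvg, Real.rpow_sub_one hpos.ne']
  field_simp

lemma integral_mul_hardyAvg_rpow {S : Set ℝ} (hT : 0 ≤ T) (hε : 0 < ε)
    (hf : IntervalIntegrable f volume 0 T) (hle : ∀ x ∈ Ioo 0 T, ε ≤ f x)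
    (hg : IntervalIntegrable g volume 0 T) (hC : ∀ x ∈ Ioo 0 T, |g x| ≤ C) (hr : r ≤ 0)
    (hS : S.Countable) (hfS : ∀ x ∈ Ioo 0 T \ S, ContinuousAt f x)
    (hgS : ∀ x ∈ Ioo 0 T \ S, ContinuousAt g x) :
    ∫ s in (0 : ℝ)..T, g s * hardyAvg f s ^ r =
      T * hardyAvg g T * hardyAvg f T ^ r -
        r * ∫ s in (0 : ℝ)..T,
          (f s * hardyAvg f s ^ (r - 1) - hardyAvg f s ^ r) * hardyAvg g s := by
  have hgF := intervalIntegrable_mul_hardyAvg_rpow hT hε hf hle hg hr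
  have hrem := intervalIntegrable_mul_hardyAvg_rpow_sub_mul_hardyAvg hT hε hf hle hg hC hr
  have hcont : ContinuousOn (fun s => (∫ y in (0 : ℝ)..s, g y) * hardyAvg f s ^ r) (Icc 0 T) :=
    continuousOn_Icc_mul_of_abs_le
      ((continuousOn_primitive_interval' hg left_mem_uIcc).mono Icc_subset_uIcc)
      integral_same (continuousOn_hardyAvg_rpow hε hf hle r)
      fun s hs => abs_rpow_le_of_nonpos hε (le_hardyAvg hf hle hs) hr
  have hFTC := integral_eq_of_hasDerivAt_off_countable_of_le _ _ hT hS hcont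
    (fun x hx => hasDerivAt_integral_mul_hardyAvg_rpow hf hg hx.1
      (hε.trans_le (le_hardyAvg hf hle (Ioo_subset_Ioc_self hx.1))) (hfS x hx) (hgS x hx))
    (hgF.add (hrem.const_mul r))
  rw [integral_add hgF (hrem.const_mul r), intervalIntegral.integral_const_mul, integral_same,
    zero_mul, sub_zero, ← mul_hardyAvg g] at hFTC
  exact eq_sub_of_add_eq hFTC

lemma integral_hardyAvg_rpow {S : Set ℝ} (hT : 0 < T) (hε : 0 < ε)
    (hf : IntervalIntegrable f volume 0 T) (hle : ∀ x ∈ Ioo 0 T, ε ≤ f x) (hr : r ≤ 0)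
    (hS : S.Countable) (hfS : ∀ x ∈ Ioo 0 T \ S, ContinuousAt f x) :
    ∫ s in (0 : ℝ)..T, hardyAvg f s ^ r =
      T * hardyAvg f T ^ r -
        r * ∫ s in (0 : ℝ)..T, (f s * hardyAvg f s ^ (r - 1) - hardyAvg f s ^ r) := by
  have hparts := integral_mul_hardyAvg_rpow hT.le hε hf hle
    (intervalIntegrable_const (c := (1 : ℝ))) (fun _ _ => abs_one.le) hr hS hfS
    fun _ _ => continuousAt_const
  have hone : ∫ s in (0 : ℝ)..T,
        (f s * hardyAvg f s ^ (r - 1) - hardyAvg f s ^ r) * hardyAvg (fun _ => 1) s =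
      ∫ s in (0 : ℝ)..T, (f s * hardyAvg f s ^ (r - 1) - hardyAvg f s ^ r) := by
    refine integral_congr_Ioo_of_le hT.le fun s hs => ?_
    simp only [hardyAvg_const 1 hs.1.ne', mul_one]
  simpa only [hone, hardyAvg_const 1 hT.ne', one_mul, mul_one] using hparts

lemma integral_mul_hardyAvg_rpow_sub_mul_hardyAvg_le {k : ℝ} (hT : 0 ≤ T) (hε : 0 < ε)
    (hf : IntervalIntegrable f volume 0 T) (hle : ∀ x ∈ Ioo 0 T, ε ≤ f x)
    (hself : ∀ x ∈ Ioo 0 T, hardyAvg f x ≤ f x)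
    (hg : IntervalIntegrable g volume 0 T) (hC : ∀ x ∈ Ioo 0 T, |g x| ≤ C)
    (hA : ∀ x ∈ Ioo 0 T, hardyAvg g x ≤ c * hardyAvg f x ^ k) (hr : r ≤ 0) (hrk : r + k ≤ 0) :
    ∫ s in (0 : ℝ)..T, (f s * hardyAvg f s ^ (r - 1) - hardyAvg f s ^ r) * hardyAvg g s ≤
      c * ∫ s in (0 : ℝ)..T, (f s * hardyAvg f s ^ (r + k - 1) - hardyAvg f s ^ (r + k)) := by
  rw [← intervalIntegral.integral_const_mul]
  refine integral_mono_on_of_le_Ioo hT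
    (intervalIntegrable_mul_hardyAvg_rpow_sub_mul_hardyAvg hT hε hf hle hg hC hr)
    ((intervalIntegrable_mul_hardyAvg_rpow_sub hT hε hf hle hrk).const_mul c) fun x hx => ?_
  have hF : 0 < hardyAvg f x := hε.trans_le (le_hardyAvg hf hle (Ioo_subset_Ioc_self hx))
  have hfactor (m : ℝ) : f x * hardyAvg f x ^ (m - 1) - hardyAvg f x ^ m =
      (f x - hardyAvg f x) * hardyAvg f x ^ (m - 1) := by
    rw [Real.rpow_sub_one hF.ne']; field_simp
  have hnonneg : 0 ≤ f x * hardyAvg f x ^ (r - 1) - hardyAvg f x ^ r := by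
    rw [hfactor]
    exact mul_nonneg (sub_nonneg.2 (hself x hx)) (Real.rpow_nonneg hF.le _)
  calc (f x * hardyAvg f x ^ (r - 1) - hardyAvg f x ^ r) * hardyAvg g x
      ≤ (f x * hardyAvg f x ^ (r - 1) - hardyAvg f x ^ r) * (c * hardyAvg f x ^ k) :=
        mul_le_mul_of_nonneg_left (hA x hx) hnonneg
    _ = c * (f x * hardyAvg f x ^ (r + k - 1) - hardyAvg f x ^ (r + k)) := by
        rw [hfactor, hfactor, add_sub_right_comm, Real.rpow_add hF]; ring

lemma integral_mul_hardyAvg_rpow_le {S : Set ℝ} {a b : ℝ} (hT : 0 < T) (hb : 0 ≤ b) (hab : a ≤ b)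
    (hε : 0 < ε) (hf : IntervalIntegrable f volume 0 T) (hle : ∀ x ∈ Ioo 0 T, ε ≤ f x)
    (hself : ∀ x ∈ Ioo 0 T, hardyAvg f x ≤ f x)
    (hg : IntervalIntegrable g volume 0 T) (hC : ∀ x ∈ Ioo 0 T, |g x| ≤ C)
    (hA : ∀ x ∈ Ioc 0 T, hardyAvg g x ≤ c * hardyAvg f x ^ (-a))
    (hS : S.Countable) (hfS : ∀ x ∈ Ioo 0 T \ S, ContinuousAt f x)
    (hgS : ∀ x ∈ Ioo 0 T \ S, ContinuousAt g x) :
    b * ∫ s in (0 : ℝ)..T, g s * hardyAvg f s ^ (-b + a) ≤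
      (b - a) * c * (∫ s in (0 : ℝ)..T, hardyAvg f s ^ (-b)) +
        a * c * (T * hardyAvg f T ^ (-b)) := by
  have hTmem : T ∈ Ioc 0 T := ⟨hT, le_rfl⟩
  have hF : 0 < hardyAvg f T := hε.trans_le (le_hardyAvg hf hle hTmem)
  have hboundary : hardyAvg g T * hardyAvg f T ^ (-b + a) ≤ c * hardyAvg f T ^ (-b) :=
    calc hardyAvg g T * hardyAvg f T ^ (-b + a)
        ≤ c * hardyAvg f T ^ (-a) * hardyAvg f T ^ (-b + a) :=
          mul_le_mul_of_nonneg_right (hA T hTmem) (Real.rpow_nonneg hF.le _)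
      _ = c * hardyAvg f T ^ (-b) := by rw [mul_assoc, ← Real.rpow_add hF]; ring_nf
  have hremainder := integral_mul_hardyAvg_rpow_sub_mul_hardyAvg_le hT.le hε hf hle hself hg hC
    (fun x hx => hA x (Ioo_subset_Ioc_self hx)) (r := -b + a) (by linarith) (by linarith)
  rw [add_neg_cancel_right] at hremainder
  rw [integral_mul_hardyAvg_rpow hT.le hε hf hle hg hC (by linarith) hS hfS hgS,
    integral_hardyAvg_rpow hT hε hf hle (by linarith) hS hfS]
  linear_combination b * T * hboundary + b * (b - a) * hremainder

end HardyAvgRpow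

section Monotone

variable {f : ℝ → ℝ} {T a b c : ℝ}

lemma exists_countable_continuousAt_of_monotoneOn_Ioo (hmono : MonotoneOn f (Ioo 0 T)) :
    ∃ S : Set ℝ, S.Countable ∧ ∀ x ∈ Ioo 0 T \ S, ContinuousAt f x := by
  refine ⟨_, hmono.countable_not_continuousWithinAt, fun x hx => ?_⟩
  have hcont : ContinuousWithinAt f (Ioo 0 T) x := by_contra fun h => hx.2 ⟨hx.1, h⟩
  exact hcont.continuousAt (Ioo_mem_nhds hx.1.1 hx.1.2)

lemma le_of_monotoneOn_Ico (hmono : MonotoneOn f (Ico 0 T)) : ∀ x ∈ Ioo 0 T, f 0 ≤ f x :=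
  fun _ hx => hmono ⟨le_rfl, hx.1.trans hx.2⟩ (Ioo_subset_Ico_self hx) hx.1.le

lemma abs_rpow_neg_le_of_monotoneOn (ha : 0 ≤ a) (h0 : 0 < f 0) (hmono : MonotoneOn f (Ico 0 T)) :
    ∀ x ∈ Ioo 0 T, |f x ^ (-a)| ≤ f 0 ^ (-a) := fun x hx =>
  abs_rpow_le_of_nonpos h0 (le_of_monotoneOn_Ico hmono x hx) (neg_nonpos.2 ha)

lemma intervalIntegrable_rpow_neg_of_monotoneOn (hT : 0 ≤ T) (ha : 0 ≤ a) (h0 : 0 < f 0)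
    (hmono : MonotoneOn f (Ico 0 T)) : IntervalIntegrable (fun s => f s ^ (-a)) volume 0 T :=
  intervalIntegrable_of_abs_le hT ((aemeasurable_restrict_of_monotoneOn measurableSet_Ioo
      (hmono.mono Ioo_subset_Ico_self)).pow_const _).aestronglyMeasurable
    (abs_rpow_neg_le_of_monotoneOn ha h0 hmono)

lemma integral_rpow_neg_mul_hardyAvg_rpow_le (hT : 0 < T) (ha : 0 ≤ a) (hab : a ≤ b)
    (h0 : 0 < f 0) (hmono : MonotoneOn f (Ico 0 T)) (hf : IntervalIntegrable f volume 0 T)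
    (hA : ∀ s ∈ Ioc 0 T, hardyAvg (fun y => f y ^ (-a)) s ≤ c * hardyAvg f s ^ (-a)) :
    b * ∫ s in (0 : ℝ)..T, f s ^ (-a) * hardyAvg f s ^ (-b + a) ≤
      (b - a) * c * (∫ s in (0 : ℝ)..T, hardyAvg f s ^ (-b)) +
        a * c * (T * hardyAvg f T ^ (-b)) := by
  have hle := le_of_monotoneOn_Ico hmono
  have hself : ∀ x ∈ Ioo 0 T, hardyAvg f x ≤ f x := fun x hx =>
    hardyAvg_le_self_of_monotoneOn (intervalIntegrable_of_mem_Ioc hf (Ioo_subset_Ioc_self hx))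
      (hmono.mono fun y hy => ⟨hy.1.le, hy.2.trans_lt hx.2⟩) hx.1
  obtain ⟨S, hS, hfS⟩ :=
    exists_countable_continuousAt_of_monotoneOn_Ioo (hmono.mono Ioo_subset_Ico_self)
  exact integral_mul_hardyAvg_rpow_le hT (ha.trans hab) hab h0 hf hle hself
    (intervalIntegrable_rpow_neg_of_monotoneOn hT.le ha h0 hmono)
    (abs_rpow_neg_le_of_monotoneOn ha h0 hmono) hA hS hfS
    fun x hx => (hfS x hx).rpow_const (.inl (h0.trans_le (hle x hx.1)).ne')

lemma intervalIntegrable_of_monotoneOn_of_hardyAvg_le {C : ℝ} (hT : 0 < T) (h0 : 0 ≤ f 0)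
    (hmono : MonotoneOn f (Ico 0 T)) (hC : ∀ t ∈ Ioo (T / 2) T, hardyAvg f t ≤ C) :
    IntervalIntegrable f volume 0 T := by
  obtain ⟨u, -, hu, hlim⟩ := exists_seq_strictMono_tendsto' (half_lt_self hT)
  rw [intervalIntegrable_iff_integrableOn_Ioc_of_le hT.le]
  refine integrableOn_Ioc_of_intervalIntegral_norm_bounded_right (I := T * C) (fun n => ?_) hlim
    (.of_forall fun n => ?_)
  · have hmono_Icc : MonotoneOn f (Icc 0 (u n)) :=
      hmono.mono fun _ hy => ⟨hy.1, hy.2.trans_lt (hu n).2⟩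
    exact (hmono_Icc.integrableOn_isCompact isCompact_Icc).mono_set Ioc_subset_Icc_self
  · have hun : 0 < u n := (half_pos hT).trans (hu n).1
    have hnonneg : ∀ y ∈ Ioc 0 (u n), 0 ≤ f y := fun y hy =>
      h0.trans (le_of_monotoneOn_Ico hmono y ⟨hy.1, hy.2.trans_lt (hu n).2⟩)
    have havg : 0 ≤ hardyAvg f (u n) :=
      hardyAvg_nonneg hun.le fun y hy => hnonneg y (Ioo_subset_Ioc_self hy)
    calc ∫ y in Ioc 0 (u n), ‖f y‖ = u n * hardyAvg f (u n) := by
          rw [mul_hardyAvg, integral_of_le hun.le]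
          exact setIntegral_congr_fun measurableSet_Ioc fun y hy =>
            Real.norm_of_nonneg (hnonneg y hy)
      _ ≤ T * C := mul_le_mul (hu n).2.le (hC _ (hu n)) havg hT.le

end Monotone

lemma le_rpow_mul_rpow_neg_of_mul_rpow_le {x y r M : ℝ} (hr : 0 < r) (hx : 0 < x) (hy : 0 ≤ y)
    (h : x * y ^ r ≤ M) : y ≤ M ^ (1 / r) * x ^ (-(1 / r)) := by
  have hM : 0 ≤ M := (mul_nonneg hx.le (Real.rpow_nonneg hy r)).trans h
  calc y = (y ^ r) ^ (1 / r) := by rw [one_div, Real.rpow_rpow_inv hy hr.ne']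
    _ ≤ (M / x) ^ (1 / r) :=
        Real.rpow_le_rpow (Real.rpow_nonneg hy r) ((le_div_iff₀' hx).2 h) (by positivity)
    _ = M ^ (1 / r) * x ^ (-(1 / r)) := by
        rw [Real.div_rpow hM hx.le, Real.rpow_neg hx.le, div_eq_mul_inv]

/-- The `A_q` condition with constant `M` for `f` on the single interval `(0, t)`. -/
def AqBound (q M : ℝ) (f : ℝ → ℝ) (t : ℝ) : Prop :=
  hardyAvg f t * hardyAvg (fun y => f y ^ (-(1 / (q - 1)))) t ^ (q - 1) ≤ M

section AqBound

variable {f : ℝ → ℝ} {T q M t : ℝ}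

lemma intervalIntegrable_of_aqBound (hT : 0 < T) (hq : 1 < q) (h0 : 0 < f 0)
    (hmono : MonotoneOn f (Ico 0 T)) (hAq : ∀ t ∈ Ioo 0 T, AqBound q M f t) :
    IntervalIntegrable f volume 0 T := by
  have hq' : 0 < q - 1 := sub_pos.2 hq
  set g : ℝ → ℝ := fun y => f y ^ (-(1 / (q - 1)))
  have hg : IntervalIntegrable g volume 0 T :=
    intervalIntegrable_rpow_neg_of_monotoneOn hT.le (one_div_pos.2 hq').le h0 hmono
  have hgpos : ∀ x ∈ Ioo 0 T, 0 < g x := fun x hx =>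
    Real.rpow_pos_of_pos (h0.trans_le (le_of_monotoneOn_Ico hmono x hx)) _
  obtain ⟨κ, hκ, hκg⟩ := exists_pos_le_hardyAvg hT hg hgpos
  refine intervalIntegrable_of_monotoneOn_of_hardyAvg_le (C := M / κ ^ (q - 1)) hT h0.le hmono
    fun t ht => ?_
  have htT : t ∈ Ioo 0 T := ⟨(half_pos hT).trans ht.1, ht.2⟩
  have hF : 0 ≤ hardyAvg f t := hardyAvg_nonneg htT.1.le fun x hx =>
    h0.le.trans (le_of_monotoneOn_Ico hmono x ⟨hx.1, hx.2.trans ht.2⟩)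
  rw [le_div_iff₀ (Real.rpow_pos_of_pos hκ _)]
  exact (mul_le_mul_of_nonneg_left (Real.rpow_le_rpow hκ.le (hκg t ht) hq'.le) hF).trans
    (hAq t htT)

lemma hardyAvg_rpow_neg_le_of_aqBound (hq : 1 < q) (ht : 0 ≤ t) (hF : 0 < hardyAvg f t)
    (hf : ∀ x ∈ Ioo 0 t, 0 ≤ f x) (h : AqBound q M f t) :
    hardyAvg (fun y => f y ^ (-(1 / (q - 1)))) t ≤
      M ^ (1 / (q - 1)) * hardyAvg f t ^ (-(1 / (q - 1))) :=
  le_rpow_mul_rpow_neg_of_mul_rpow_le (sub_pos.2 hq) hF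
    (hardyAvg_nonneg ht fun x hx => Real.rpow_nonneg (hf x hx) _) h

end AqBound

section Exponents

variable {p q M : ℝ}

lemma rpow_one_div_mul_rpow_one_div_rpow (hp : 1 < p) (hq : 1 < q) (hM : 0 < M) :
    M ^ (1 / (p - 1)) * (M ^ (1 / (q - 1))) ^ (-((q - p) / (p - 1))) = M ^ (1 / (q - 1)) := by
  have hp' : p - 1 ≠ 0 := (sub_pos.2 hp).ne'
  have hq' : q - 1 ≠ 0 := (sub_pos.2 hq).ne'
  rw [← Real.rpow_mul hM.le, ← Real.rpow_add hM]
  congr 1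
  field_simp
  ring

lemma mul_le_add_of_one_div_mul_le {X Y Z : ℝ} (hp : 1 < p) (hpq : p < q)
    (h : 1 / (p - 1) * X ≤ (1 / (p - 1) - 1 / (q - 1)) * Y + 1 / (q - 1) * Z) :
    (q - 1) / (q - p) * X ≤ Y + (p - 1) / (q - p) * Z := by
  have hp' : 0 < p - 1 := sub_pos.2 hp
  have hq' : 0 < q - 1 := sub_pos.2 (hp.trans hpq)
  have hqp : 0 < q - p := sub_pos.2 hpq
  calc (q - 1) / (q - p) * X
      = (p - 1) * (q - 1) / (q - p) * (1 / (p - 1) * X) := by field_simp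
    _ ≤ (p - 1) * (q - 1) / (q - p) *
          ((1 / (p - 1) - 1 / (q - 1)) * Y + 1 / (q - 1) * Z) :=
        mul_le_mul_of_nonneg_left h (by positivity)
    _ = Y + (p - 1) / (q - p) * Z := by field_simp; ring

end Exponents

/-- **Inequality (3.3).** Let `1 < p < q`, `M ≥ 1`, and let `f : [0,1) → (0,∞)` be
non-decreasing, bounded below by `ε > 0`, satisfying the `A_q` condition with constant
`M` on each `(0,t)`, `t ∈ (0,1]`. With `c = M^{1/(q-1)}`, for every `t ∈ (0,1]`,
`((q−1)/(q−p)) ∫_0^t f(s)^{-1/(q-1)} ((1/s)∫_0^s f)^{-1/(p-1)+1/(q-1)} ds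
  ≤ c ∫_0^t ((1/s)∫_0^s f)^{-1/(p-1)} ds
    + ((p−1)/(q−p)) M^{1/(p-1)} c^{-(q-p)/(p-1)} t ((1/t)∫_0^t f)^{-1/(p-1)}`. -/
theorem key_inequality_one (p q ε M : ℝ) (hp : 1 < p) (hpq : p < q) (hε : 0 < ε)
    (hM : 1 ≤ M) (f : ℝ → ℝ) (hfm : Measurable f)
    (hmono : MonotoneOn f (Set.Ico 0 1))
    (hlb : ∀ x ∈ Set.Ico (0 : ℝ) 1, ε ≤ f x)
    (hpos : ∀ x ∈ Set.Ico (0 : ℝ) 1, 0 < f x)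
    (hAq : ∀ t ∈ Set.Ioc (0 : ℝ) 1,
      ((1 / t) * ∫ y in (0 : ℝ)..t, f y) *
        ((1 / t) * ∫ y in (0 : ℝ)..t, f y ^ (-(1 / (q - 1)))) ^ (q - 1) ≤ M) :
    ∀ t ∈ Set.Ioc (0 : ℝ) 1,
      ((q - 1) / (q - p)) *
          (∫ s in (0 : ℝ)..t, f s ^ (-(1 / (q - 1))) *
            ((1 / s) * ∫ y in (0 : ℝ)..s, f y) ^ (-(1 / (p - 1)) + 1 / (q - 1)))
        ≤ M ^ (1 / (q - 1)) *
            (∫ s in (0 : ℝ)..t, ((1 / s) * ∫ y in (0 : ℝ)..s, f y) ^ (-(1 / (p - 1))))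
          + ((p - 1) / (q - p)) * M ^ (1 / (p - 1)) *
              (M ^ (1 / (q - 1))) ^ (-((q - p) / (p - 1))) * t *
              ((1 / t) * ∫ y in (0 : ℝ)..t, f y) ^ (-(1 / (p - 1))) := by
  intro t ht
  have hq : 1 < q := hp.trans hpq
  have h0 : 0 < f 0 := hpos 0 ⟨le_rfl, one_pos⟩
  have hmono_t : MonotoneOn f (Ico 0 t) := hmono.mono (Ico_subset_Ico_right ht.2)
  have hAq_t : ∀ s ∈ Ioc 0 t, AqBound q M f s := fun s hs => hAq s ⟨hs.1, hs.2.trans ht.2⟩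
  have hf : IntervalIntegrable f volume 0 t :=
    intervalIntegrable_of_aqBound ht.1 hq h0 hmono_t fun s hs => hAq_t s (Ioo_subset_Ioc_self hs)
  have hF : ∀ s ∈ Ioc 0 t, 0 < hardyAvg f s := fun s hs =>
    h0.trans_le (le_hardyAvg hf (le_of_monotoneOn_Ico hmono_t) hs)
  have hA : ∀ s ∈ Ioc 0 t, hardyAvg (fun y => f y ^ (-(1 / (q - 1)))) s ≤
      M ^ (1 / (q - 1)) * hardyAvg f s ^ (-(1 / (q - 1))) := fun s hs =>
    hardyAvg_rpow_neg_le_of_aqBound hq hs.1.le (hF s hs)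
      (fun x hx => (hpos x ⟨hx.1.le, hx.2.trans_le (hs.2.trans ht.2)⟩).le) (hAq_t s hs)
  have key := integral_rpow_neg_mul_hardyAvg_rpow_le ht.1 (one_div_pos.2 (sub_pos.2 hq)).le
    (one_div_lt_one_div_of_lt (sub_pos.2 hp) (sub_lt_sub_right hpq 1)).le h0 hmono_t hf hA
  simp only [mul_assoc] at key
  rw [mul_assoc ((p - 1) / (q - p)),
    rpow_one_div_mul_rpow_one_div_rpow hp hq (one_pos.trans_le hM)]
  simpa only [hardyAvg, mul_assoc] using mul_le_add_of_one_div_mul_le hp hpq key
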